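/- Consider the decomposed system with state x = (x₁, x₂, x_c) ∈ ℝ^{n₁} × ℝ^{n₂} × ℝ^{n_c}, controls u = (u₁, u₂) with u_i valued in a nonempty set U_i ⊆ ℝ^{m_i}, and dynamics ẋ₁ = f₁(x₁, x_c) + g₁(x₁, x_c) u₁, ẋ₂ = f₂(x₂, x_c) + g₂(x₂, x_c) u₂, ẋ_c = f_c(x_c). Let (u₁, ζ₁) and (u₂, ζ₂) be admissible pairs for subsystems 1 and 2 on [t, 0], writing ζ_i(s) = (ζ_iᵃ(s), ζ_iᶜ(s)) for its x_i- and x_c-components. (i) If ζ₁ᶜ(s) = ζ₂ᶜ(s) for all s ∈ [t, 0], then u = (u₁, u₂) together with ξ(s) = (ζ₁ᵃ(s), ζ₂ᵃ(s), ζ₁ᶜ(s)) is an admissible pair for the full system on [t, 0]. (ii) If f_c is Lipschitz and ζ₁ᶜ(t) = ζ₂ᶜ(t), then automatically ζ₁ᶜ(s) = ζ₂ᶜ(s) for all s ∈ [t, 0]. -/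

import Mathlib

open MeasureTheory Set

noncomputable section

abbrev Euc (n : ℕ) : Type := EuclideanSpace ℝ (Fin n)

/-- An admissible pair for the control system `ξ' = R (ξ, u)` with control set `U` on the
interval `[t, 0]`: a measurable control taking values in `U` together with a continuous
trajectory satisfying the integral form of the dynamics, with integrable integrand. -/
def IsAdmissiblePair {E F : Type*} [NormedAddCommGroup E] [NormedSpace ℝ E]
    [CompleteSpace E] [MeasurableSpace F]
    (R : E → F → E) (U : Set F) (t : ℝ) (u : ℝ → F) (ξ : ℝ → E) : Prop :=
  Measurable u ∧ (∀ s, u s ∈ U) ∧ Continuous ξ ∧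
    ∀ s ∈ Icc t (0 : ℝ),
      IntervalIntegrable (fun τ => R (ξ τ) (u τ)) volume t s ∧
      ξ s = ξ t + ∫ τ in t..s, R (ξ τ) (u τ)

theorem aux_fst {A B : Type*} [NormedAddCommGroup A] [NormedSpace ℝ A] [CompleteSpace A]
    [NormedAddCommGroup B] [NormedSpace ℝ B] [CompleteSpace B] {F : ℝ → A} {G : ℝ → B} {a b : ℝ}
    (h : IntervalIntegrable (fun τ => (F τ, G τ)) volume a b) :
    IntervalIntegrable F volume a b ∧ IntervalIntegrable G volume a b :=
  ⟨⟨h.1.fst, h.2.fst⟩, ⟨h.1.snd, h.2.snd⟩⟩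

theorem aux_mk {A B : Type*} [NormedAddCommGroup A] [NormedSpace ℝ A] [CompleteSpace A]
    [NormedAddCommGroup B] [NormedSpace ℝ B] [CompleteSpace B] {F : ℝ → A} {G : ℝ → B} {a b : ℝ}
    (hF : IntervalIntegrable F volume a b) (hG : IntervalIntegrable G volume a b) :
    IntervalIntegrable (fun τ => (F τ, G τ)) volume a b ∧
    ∫ τ in a..b, (F τ, G τ) = (∫ τ in a..b, F τ, ∫ τ in a..b, G τ) := by
  have h : IntervalIntegrable (fun τ => (F τ, G τ)) volume a b :=
    ⟨hF.1.prodMk hG.1, hF.2.prodMk hG.2⟩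
  refine ⟨h, Prod.ext ?_ ?_⟩
  · exact ((ContinuousLinearMap.fst ℝ A B).intervalIntegral_comp_comm h).symm
  · exact ((ContinuousLinearMap.snd ℝ A B).intervalIntegral_comp_comm h).symm

theorem aux_split {A B : Type*} [NormedAddCommGroup A] [NormedSpace ℝ A] [CompleteSpace A]
    [NormedAddCommGroup B] [NormedSpace ℝ B] [CompleteSpace B] {F : ℝ → A} {G : ℝ → B} {a b : ℝ}
    {x y : A × B}
    (h : IntervalIntegrable (fun τ => (F τ, G τ)) volume a b)
    (e : x = y + ∫ τ in a..b, (F τ, G τ)) :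
    x.1 = y.1 + ∫ τ in a..b, F τ ∧ x.2 = y.2 + ∫ τ in a..b, G τ := by
  rw [(aux_mk (aux_fst h).1 (aux_fst h).2).2] at e
  rw [e]
  exact ⟨rfl, rfl⟩

theorem aux_deriv {E : Type*} [NormedAddCommGroup E] [NormedSpace ℝ E] [CompleteSpace E]
    {fc : E → E} (hf : Continuous fc) {c : ℝ → E} (hc : Continuous c) {t : ℝ}
    (h : ∀ s ∈ Icc t (0 : ℝ), c s = c t + ∫ τ in t..s, fc (c τ)) :
    ∀ s ∈ Ico t (0 : ℝ), HasDerivWithinAt c (fc (c s)) (Ici s) s := by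
  intro s hs
  have h1 : HasDerivAt (fun r => c t + ∫ τ in t..r, fc (c τ)) (fc (c s)) s :=
    ((hf.comp hc).integral_hasStrictDerivAt t s).hasDerivAt.const_add _
  refine h1.hasDerivWithinAt.congr_of_eventuallyEq ?_ (h s ⟨hs.1, hs.2.le⟩)
  filter_upwards [Icc_mem_nhdsGE hs.2] with r hr
  exact h r ⟨hs.1.trans hr.1, hr.2⟩

/-- Gluing lemma for self-contained subsystems without shared controls.
(i) Subsystem admissible pairs whose shared-state components agree on `[t, 0]` glue by
back-projection to an admissible pair of the full system.
(ii) If the shared dynamics `f_c` is Lipschitz, agreement of the shared-state components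
at the initial time forces agreement on all of `[t, 0]`. -/
theorem admissiblePair_glue {n₁ n₂ nc m₁ m₂ : ℕ}
    (f₁ : Euc n₁ × Euc nc → Euc n₁) (g₁ : Euc n₁ × Euc nc → (Euc m₁ →L[ℝ] Euc n₁))
    (f₂ : Euc n₂ × Euc nc → Euc n₂) (g₂ : Euc n₂ × Euc nc → (Euc m₂ →L[ℝ] Euc n₂))
    (fc : Euc nc → Euc nc)
    (U₁ : Set (Euc m₁)) (U₂ : Set (Euc m₂)) (hU₁ : U₁.Nonempty) (hU₂ : U₂.Nonempty)
    (t : ℝ) (ht : t ≤ 0)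
    (u₁ : ℝ → Euc m₁) (ζ₁ : ℝ → Euc n₁ × Euc nc)
    (u₂ : ℝ → Euc m₂) (ζ₂ : ℝ → Euc n₂ × Euc nc)
    (h₁ : IsAdmissiblePair
      (fun z v₁ => ((f₁ z + g₁ z v₁, fc z.2) : Euc n₁ × Euc nc)) U₁ t u₁ ζ₁)
    (h₂ : IsAdmissiblePair
      (fun z v₂ => ((f₂ z + g₂ z v₂, fc z.2) : Euc n₂ × Euc nc)) U₂ t u₂ ζ₂) :
    -- (i) gluing under agreement of the shared-state components
    ((∀ s ∈ Icc t (0 : ℝ), (ζ₁ s).2 = (ζ₂ s).2) →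
      IsAdmissiblePair
        (fun x v => ((f₁ (x.1, x.2.2) + g₁ (x.1, x.2.2) v.1,
          f₂ (x.2.1, x.2.2) + g₂ (x.2.1, x.2.2) v.2, fc x.2.2) : Euc n₁ × Euc n₂ × Euc nc))
        (U₁ ×ˢ U₂) t (fun s => (u₁ s, u₂ s))
        (fun s => (((ζ₁ s).1, (ζ₂ s).1, (ζ₁ s).2) : Euc n₁ × Euc n₂ × Euc nc))) ∧
    -- (ii) uniqueness of the shared-state trajectory for Lipschitz `f_c`
    ((∃ K, LipschitzWith K fc) → (ζ₁ t).2 = (ζ₂ t).2 →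
      ∀ s ∈ Icc t (0 : ℝ), (ζ₁ s).2 = (ζ₂ s).2) := by
  obtain ⟨mu₁, hu₁, c₁, e₁⟩ := h₁
  obtain ⟨mu₂, hu₂, c₂, e₂⟩ := h₂
  refine ⟨fun hag => ⟨mu₁.prodMk mu₂, fun s => ⟨hu₁ s, hu₂ s⟩,
    c₁.fst.prodMk (c₂.fst.prodMk c₁.snd), fun s hs => ?_⟩, ?_⟩
  · obtain ⟨i₁, j₁⟩ := e₁ s hs
    obtain ⟨i₂, j₂⟩ := e₂ s hs
    obtain ⟨a₁, b₁⟩ := aux_split i₁ j₁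
    obtain ⟨a₂, b₂⟩ := aux_split i₂ j₂
    obtain ⟨p₁, q₁⟩ := aux_fst i₁
    obtain ⟨p₂, q₂⟩ := aux_fst i₂
    have hz : ∀ τ ∈ uIcc t s, f₂ (ζ₂ τ) + g₂ (ζ₂ τ) (u₂ τ) =
        f₂ ((ζ₂ τ).1, (ζ₁ τ).2) + g₂ ((ζ₂ τ).1, (ζ₁ τ).2) (u₂ τ) := by
      intro τ hτ
      rw [uIcc_of_le hs.1] at hτ
      rw [hag τ ⟨hτ.1, hτ.2.trans hs.2⟩]
    have p₂' := p₂.congr (fun τ hτ => hz τ (uIoc_subset_uIcc hτ))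
    rw [intervalIntegral.integral_congr hz] at a₂
    obtain ⟨k, l⟩ := aux_mk p₂' q₁
    obtain ⟨k', l'⟩ := aux_mk p₁ k
    refine ⟨k', ?_⟩
    refine Eq.trans ?_ (congrArg _ l'.symm)
    rw [l]
    exact Prod.ext a₁ (Prod.ext a₂ b₁)
  · rintro ⟨K, hK⟩ h0
    have d₁ := aux_deriv hK.continuous c₁.snd
      (fun s hs => (aux_split (e₁ s hs).1 (e₁ s hs).2).2)
    have d₂ := aux_deriv hK.continuous c₂.snd
      (fun s hs => (aux_split (e₂ s hs).1 (e₂ s hs).2).2)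
    exact ODE_solution_unique (v := fun _ => fc) (fun _ => hK) c₁.snd.continuousOn d₁
      c₂.snd.continuousOn d₂ h0
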